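/- arXiv:0709.3821 — 2 statements merged into one kernel-verified Lean document; each statement's English description precedes it below -/
import Mathlib

section
/- Let m be an even positive integer and let l be an odd integer with 0 ≤ l ≤ m−1. Then for every natural number x, S_{m,l}(2x) = −S_{m/2, (l−1)/2}(x). -/
/-- The Newman sum `S_{m,l}(x) = ∑_{0 ≤ n < x, n ≡ l (mod m)} (-1)^{σ(n)}`,
where `σ(n)` is the sum of the binary digits of `n`. -/
def newmanSum (m l x : ℕ) : ℤ :=
  ∑ n ∈ Finset.range x, if n % m = l then (-1 : ℤ) ^ ((Nat.digits 2 n).sum) else 0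

theorem sum_digits_mul_add {b d : ℕ} (hd : d < b) (n : ℕ) :
    (Nat.digits b (b * n + d)).sum = (Nat.digits b n).sum + d := by
  obtain rfl | hb : b = 1 ∨ 1 < b := by omega
  · rw [Nat.lt_one_iff.mp hd, one_mul, add_zero, add_zero]
  obtain ⟨rfl, rfl⟩ | hne : (d = 0 ∧ n = 0) ∨ (d ≠ 0 ∨ n ≠ 0) := by tauto
  · rfl
  · rw [add_comm (b * n), Nat.digits_add b hb d n hd hne, List.sum_cons, add_comm]

theorem mul_add_mod_mul_eq_mul_add_iff {b d e : ℕ} (hd : d < b) (he : e < b) (n k j : ℕ) :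
    (b * n + e) % (b * k) = b * j + d ↔ n % k = j ∧ e = d := by
  have hb : 0 < b := Nat.zero_lt_of_lt hd
  have hquot : (b * n + e) % (b * k) / b = n % k := by
    rw [Nat.mod_mul_right_div_self, Nat.mul_add_div hb, Nat.div_eq_of_lt he, add_zero]
  have hrem : (b * n + e) % (b * k) % b = e := by
    rw [Nat.mod_mul_right_mod, Nat.mul_add_mod, Nat.mod_eq_of_lt he]
  have hunique := Nat.div_mod_unique (a := (b * n + e) % (b * k)) (c := d) (d := j) hb
  rw [hquot, hrem] at hunique
  rw [hunique, and_iff_left hd, add_comm d, eq_comm]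

theorem sum_range_mul {M : Type*} [AddCommMonoid M] (b x : ℕ) (f : ℕ → M) :
    ∑ n ∈ Finset.range (b * x), f n =
      ∑ n ∈ Finset.range x, ∑ e ∈ Finset.range b, f (b * n + e) := by
  induction x with
  | zero => rfl
  | succ x ih => rw [Nat.mul_succ, Finset.sum_range_add, ih, Finset.sum_range_succ]

theorem newmanSum_two_mul_two_mul_add {d : ℕ} (hd : d < 2) (k j x : ℕ) :
    newmanSum (2 * k) (2 * j + d) (2 * x) = (-1) ^ d * newmanSum k j x := by
  unfold newmanSum
  rw [sum_range_mul, Finset.mul_sum]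
  refine Finset.sum_congr rfl fun n _ => ?_
  calc
    ∑ e ∈ Finset.range 2, (if (2 * n + e) % (2 * k) = 2 * j + d then
          (-1 : ℤ) ^ (Nat.digits 2 (2 * n + e)).sum else 0)
      = ∑ e ∈ Finset.range 2, if e = d then
          (if n % k = j then (-1 : ℤ) ^ ((Nat.digits 2 n).sum + e) else 0) else 0 := by
        refine Finset.sum_congr rfl fun e he => ?_
        have he : e < 2 := Finset.mem_range.mp he
        simp only [mul_add_mod_mul_eq_mul_add_iff hd he, sum_digits_mul_add he, and_comm,
          ite_and]
    _ = if n % k = j then (-1 : ℤ) ^ ((Nat.digits 2 n).sum + d) else 0 := by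
        rw [Finset.sum_ite_eq', if_pos (Finset.mem_range.mpr hd)]
    _ = (-1) ^ d * if n % k = j then (-1 : ℤ) ^ (Nat.digits 2 n).sum else 0 := by
        rw [mul_ite, mul_zero, add_comm, pow_add]

theorem stmt_3 (m l : ℕ) (hm : 0 < m) (hmeven : Even m) (hlodd : Odd l)
    (hl : l ≤ m - 1) (x : ℕ) :
    newmanSum m l (2 * x) = -newmanSum (m / 2) ((l - 1) / 2) x := by
  obtain ⟨k, rfl⟩ := hmeven.two_dvd
  obtain ⟨j, rfl⟩ := hlodd
  rw [Nat.add_sub_cancel, Nat.mul_div_cancel_left k two_pos, Nat.mul_div_cancel_left j two_pos,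
    newmanSum_two_mul_two_mul_add one_lt_two, pow_one, neg_one_mul]
end

section
/- For all natural numbers x ≤ y, S_{3,0}(8y) − S_{3,0}(8x) = 3·(S_{3,0}(2y) − S_{3,0}(2x)); equivalently, S_{3,0}([8x,8y)) = 3·S_{3,0}([2x,2y)). -/
/-!
Since the sign `t n = (-1)^σ(n)` satisfies `t (2n) = t n` and `t (2n + 1) = -t n`, a sum weighted by
`t` over `n < 4x` folds into one over `n < x` with the sign pattern `+ - - +` on each block
`4n, 4n + 1, 4n + 2, 4n + 3`. Modulo `3` these four numbers are `n, n + 1, n + 2, n`, so the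
indicator of the class of `l` folds to `3 · [n ≡ l] - 1`. Thus `S_{3,l}(4x)` equals `3 S_{3,l}(x)`
minus the sum of all signs up to `x`, and the latter vanishes when `x` is even because the
signs of `2n` and `2n + 1` cancel.
-/

/-- The Thue–Morse sequence with values `±1`, i.e. the sign `(-1)^σ(n)` occurring in Newman sums. -/
def thueMorseSign (n : ℕ) : ℤ :=
  (-1) ^ (Nat.digits 2 n).sum

theorem thueMorseSign_two_mul (n : ℕ) : thueMorseSign (2 * n) = thueMorseSign n := by
  rcases n.eq_zero_or_pos with rfl | hn
  · rfl
  · simp [thueMorseSign, Nat.digits_base_mul one_lt_two hn]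

theorem thueMorseSign_two_mul_add_one (n : ℕ) :
    thueMorseSign (2 * n + 1) = -thueMorseSign n := by
  simp [thueMorseSign, pow_add, Nat.mul_add_div two_pos]

section WeightedSum

variable {M : Type*} [AddCommGroup M]

theorem sum_range_two_mul_thueMorseSign_smul (f : ℕ → M) (x : ℕ) :
    ∑ n ∈ Finset.range (2 * x), thueMorseSign n • f n =
      ∑ n ∈ Finset.range x, thueMorseSign n • (f (2 * n) - f (2 * n + 1)) := by
  induction x with
  | zero => rfl
  | succ x ih =>
    rw [Nat.mul_succ, Finset.sum_range_succ, Finset.sum_range_succ, Finset.sum_range_succ, ih,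
      thueMorseSign_two_mul, thueMorseSign_two_mul_add_one, neg_smul, smul_sub]
    abel

theorem sum_range_four_mul_thueMorseSign_smul (f : ℕ → M) (x : ℕ) :
    ∑ n ∈ Finset.range (4 * x), thueMorseSign n • f n =
      ∑ n ∈ Finset.range x,
        thueMorseSign n • (f (4 * n) - f (4 * n + 1) - f (4 * n + 2) + f (4 * n + 3)) := by
  have four_mul_eq (k : ℕ) : 4 * k = 2 * (2 * k) := by ring
  rw [four_mul_eq, sum_range_two_mul_thueMorseSign_smul, sum_range_two_mul_thueMorseSign_smul]
  refine Finset.sum_congr rfl fun n _ ↦ congrArg (thueMorseSign n • ·) ?_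
  rw [four_mul_eq, mul_add_one]
  abel

end WeightedSum

theorem sum_range_two_mul_thueMorseSign (x : ℕ) :
    ∑ n ∈ Finset.range (2 * x), thueMorseSign n = 0 := by
  simpa using sum_range_two_mul_thueMorseSign_smul (fun _ ↦ (1 : ℤ)) x

theorem newmanSum_eq_sum_thueMorseSign_smul (m l x : ℕ) :
    newmanSum m l x =
      ∑ n ∈ Finset.range x, thueMorseSign n • if n % m = l then (1 : ℤ) else 0 := by
  simp [newmanSum, thueMorseSign]

theorem newmanSum_three_four_mul {l : ℕ} (hl : l < 3) (x : ℕ) :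
    newmanSum 3 l (4 * x) =
      3 * newmanSum 3 l x - ∑ n ∈ Finset.range x, thueMorseSign n := by
  set r : ℕ → ℤ := fun n ↦ if n % 3 = l then 1 else 0
  have block_indicator (n : ℕ) :
      r (4 * n) - r (4 * n + 1) - r (4 * n + 2) + r (4 * n + 3) = 3 * r n - 1 := by
    grind
  calc
    newmanSum 3 l (4 * x) = ∑ n ∈ Finset.range x, thueMorseSign n • (3 * r n - 1) := by
      simp only [newmanSum_eq_sum_thueMorseSign_smul, sum_range_four_mul_thueMorseSign_smul,
        ← block_indicator, r]
    _ = 3 * newmanSum 3 l x - ∑ n ∈ Finset.range x, thueMorseSign n := by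
      simp only [newmanSum_eq_sum_thueMorseSign_smul, smul_eq_mul, mul_sub, mul_one,
        Finset.sum_sub_distrib, Finset.mul_sum, mul_left_comm, r]

theorem newmanSum_three_eight_mul {l : ℕ} (hl : l < 3) (x : ℕ) :
    newmanSum 3 l (8 * x) = 3 * newmanSum 3 l (2 * x) := by
  rw [show 8 * x = 4 * (2 * x) by ring, newmanSum_three_four_mul hl,
    sum_range_two_mul_thueMorseSign, sub_zero]

theorem stmt_5_general {l : ℕ} (hl : l < 3) (x y : ℕ) :
    newmanSum 3 l (8 * y) - newmanSum 3 l (8 * x) =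
      3 * (newmanSum 3 l (2 * y) - newmanSum 3 l (2 * x)) := by
  rw [newmanSum_three_eight_mul hl, newmanSum_three_eight_mul hl, mul_sub]

theorem stmt_5 (x y : ℕ) (hxy : x ≤ y) :
    newmanSum 3 0 (8 * y) - newmanSum 3 0 (8 * x) =
      3 * (newmanSum 3 0 (2 * y) - newmanSum 3 0 (2 * x)) :=
  stmt_5_general three_pos x y
end
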